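/- Let U be a topological space and G : U → ℝ. Then G is upper semicontinuous if and only if the set {(λ, u, r) ∈ ℝ × U × ℝ : 0 ≤ λ and r ≤ λ·G(u)} is closed in ℝ × U × ℝ. -/

import Mathlib

/-! For `u' → u`, upper semicontinuity says exactly that `max (G u') (G u) → G u`. Multiplying by
nonnegative scalars `c' → c` gives `c' • G u' ≤ c' • max (G u') (G u) → c • G u`, so `c • G u` is
jointly upper semicontinuous on the closed set `{0 ≤ c}` and its hypograph there is closed.
Conversely, the slice of this hypograph at `c = 1` is the hypograph of `G`. -/

open Filter Topology

section WithinAt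

variable {X Z : Type*} [TopologicalSpace X] [LinearOrder Z] [TopologicalSpace Z] [OrderTopology Z]
  {g : X → Z} {s : Set X} {x : X}

theorem tendsto_max_of_upperSemicontinuousWithinAt (hg : UpperSemicontinuousWithinAt g s x) :
    Tendsto (fun y ↦ max (g y) (g x)) (𝓝[s] x) (𝓝 (g x)) := by
  refine tendsto_order.2 ⟨fun a ha ↦ .of_forall fun y ↦ lt_max_of_lt_right ha, fun b hb ↦ ?_⟩
  filter_upwards [hg b hb] with y hy using max_lt hy hb

theorem upperSemicontinuousWithinAt_smul {R : Type*} [Zero R] [Preorder R] [TopologicalSpace R]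
    [SMul R Z] [PosSMulMono R Z] [ContinuousSMul R Z] {f : X → R}
    (hf : ContinuousWithinAt f s x) (hf₀ : ∀ᶠ y in 𝓝[s] x, 0 ≤ f y)
    (hg : UpperSemicontinuousWithinAt g s x) :
    UpperSemicontinuousWithinAt (fun y ↦ f y • g y) s x := by
  intro b hb
  have hmax : Tendsto (fun y ↦ f y • max (g y) (g x)) (𝓝[s] x) (𝓝 (f x • g x)) :=
    hf.tendsto.smul (tendsto_max_of_upperSemicontinuousWithinAt hg)
  filter_upwards [hf₀, hmax.eventually_lt_const hb] with y hy hlt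
  exact (smul_le_smul_of_nonneg_left (le_max_left _ _) hy).trans_lt hlt

end WithinAt

section Scaling

variable {R U Z : Type*} [Preorder R] [TopologicalSpace R] [TopologicalSpace U]
  [LinearOrder Z] [TopologicalSpace Z] {G : U → Z}

theorem upperSemicontinuousOn_fst_smul_snd [OrderTopology Z] [Zero R] [SMul R Z]
    [PosSMulMono R Z] [ContinuousSMul R Z] (hG : UpperSemicontinuous G) :
    UpperSemicontinuousOn (fun p : R × U ↦ p.1 • G p.2) {p | 0 ≤ p.1} := fun p _ ↦
  upperSemicontinuousWithinAt_smul continuous_fst.continuousWithinAt self_mem_nhdsWithin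
    ((hG.comp continuous_snd).upperSemicontinuousWithinAt _ p)

theorem isClosed_nonneg_smul_hypograph [OrderTopology Z] [Zero R] [ClosedIciTopology R]
    [SMul R Z] [PosSMulMono R Z] [ContinuousSMul R Z] (hG : UpperSemicontinuous G) :
    IsClosed {p : R × U × Z | 0 ≤ p.1 ∧ p.2.2 ≤ p.1 • G p.2.1} := by
  have hnonneg : IsClosed {p : R × U | 0 ≤ p.1} := isClosed_Ici.preimage continuous_fst
  have hhypograph : IsClosed {p : (R × U) × Z | 0 ≤ p.1.1 ∧ p.2 ≤ p.1.1 • G p.1.2} :=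
    (upperSemicontinuousOn_iff_isClosed_hypograph hnonneg).1
      (upperSemicontinuousOn_fst_smul_snd hG)
  exact hhypograph.preimage (Homeomorph.prodAssoc R U Z).symm.continuous

theorem upperSemicontinuous_of_isClosed_nonneg_smul_hypograph [ClosedIicTopology Z]
    [MonoidWithZero R] [ZeroLEOneClass R] [MulAction R Z]
    (h : IsClosed {p : R × U × Z | 0 ≤ p.1 ∧ p.2.2 ≤ p.1 • G p.2.1}) :
    UpperSemicontinuous G := by
  have hslice : IsClosed {q : U × Z | 0 ≤ (1 : R) ∧ q.2 ≤ (1 : R) • G q.1} :=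
    h.preimage (Continuous.prodMk_right (1 : R))
  refine upperSemicontinuous_iff_IsClosed_hypograph.2 ?_
  simpa only [zero_le_one, true_and, one_smul] using hslice

theorem stmt_7_general [OrderTopology Z] [MonoidWithZero R] [ZeroLEOneClass R]
    [ClosedIciTopology R] [MulAction R Z] [PosSMulMono R Z] [ContinuousSMul R Z] (G : U → Z) :
    UpperSemicontinuous G ↔
      IsClosed {p : R × U × Z | 0 ≤ p.1 ∧ p.2.2 ≤ p.1 • G p.2.1} :=
  ⟨isClosed_nonneg_smul_hypograph, upperSemicontinuous_of_isClosed_nonneg_smul_hypograph⟩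

end Scaling

/-- Lemma 3.1(ii): a real-valued function `G` on a topological space is upper semicontinuous
iff it is `ℝ₊`-uniformly upper semicontinuous, i.e. iff the set
`{(λ, u, r) : 0 ≤ λ ∧ r ≤ λ * G u}` is closed. -/
theorem stmt_7 {U : Type*} [TopologicalSpace U] (G : U → ℝ) :
    UpperSemicontinuous G ↔
      IsClosed {p : ℝ × U × ℝ | 0 ≤ p.1 ∧ p.2.2 ≤ p.1 * G p.2.1} :=
  stmt_7_general G
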